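/- (Voronovskaja-type theorem) Let f ∈ L^∞(ℝ²) be differentiable at (x,y). Assume the kernel φ satisfies the partition of unity (i), M₂(φ) < ∞ with the uniform tail condition (ii), the vanishing first moments m¹_{(1,0)}(φ,u,v) = Σ_{k,j} φ(u−k,v−j)(k−u) = 0 and m¹_{(0,1)}(φ,u,v) = 0 for all (u,v). Assume the sequences satisfy a_k + b_k = α and c_j + d_j = β for constants α, β, with b_k − a_k ≥ l₀ > 0, d_j − c_j ≥ s₀ > 0, and sup_{k,j}{|a_k|,|b_k|,|c_j|,|d_j|} ≤ K. Then lim_{w→∞} w·[K_w^φ f(x,y) − f(x,y)] = (1/2)(α·∂f/∂x(x,y) + β·∂f/∂y(x,y)). -/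

import Mathlib

open Filter MeasureTheory

/-- The bivariate generalized Kantorovich sampling operator. -/
noncomputable def kantorovich (φ : ℝ × ℝ → ℝ) (a b c d : ℤ → ℝ) (f : ℝ × ℝ → ℝ)
    (w x y : ℝ) : ℝ :=
  ∑' kj : ℤ × ℤ,
    (w ^ 2 / ((b kj.1 - a kj.1) * (d kj.2 - c kj.2))) *
      φ (w * x - (kj.1 : ℝ), w * y - (kj.2 : ℝ)) *
      ∫ u in (((kj.1 : ℝ) + a kj.1) / w)..(((kj.1 : ℝ) + b kj.1) / w),
        ∫ v in (((kj.2 : ℝ) + c kj.2) / w)..(((kj.2 : ℝ) + d kj.2) / w), f (u, v)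

lemma aux_cell (f : ℝ × ℝ → ℝ) (hfm : Measurable f) (C : ℝ) (hC : ∀ p, |f p| ≤ C)
    (a b c d x y p q r B : ℝ) (hab : a ≤ b) (hcd : c ≤ d)
    (h : ∀ u v, a ≤ u → u ≤ b → c ≤ v → v ≤ d →
      |f (u, v) - (p + q * (u - x) + r * (v - y))| ≤ B) :
    |(∫ u in a..b, ∫ v in c..d, f (u, v)) -
      (b - a) * (d - c) * (p + q * ((a + b) / 2 - x) + r * ((c + d) / 2 - y))|
      ≤ B * (d - c) * (b - a) := by
  have hin : ∀ u, IntervalIntegrable (fun v => f (u, v)) volume c d := by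
    intro u
    refine (intervalIntegrable_const (c := C)).mono_fun
      (hfm.comp measurable_prodMk_left).aestronglyMeasurable ?_
    filter_upwards with v
    simpa using (hC (u, v)).trans (le_abs_self C)
  have hout : IntervalIntegrable (fun u => ∫ v in c..d, f (u, v)) volume a b := by
    have hm : StronglyMeasurable (fun u => ∫ v in c..d, f (u, v)) := by
      simp only [intervalIntegral.integral_of_le hcd]
      exact StronglyMeasurable.integral_prod_right (f := fun u v => f (u, v))
        hfm.stronglyMeasurable
    refine (intervalIntegrable_const (c := C * |d - c|)).mono_fun hm.aestronglyMeasurable ?_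
    filter_upwards with u
    have := intervalIntegral.norm_integral_le_of_norm_le_const (a := c) (b := d)
      (f := fun v => f (u, v)) (C := C) (fun v _ => hC (u, v))
    exact this.trans (le_abs_self _)
  have hl : ∀ u, ∫ v in c..d, (p + q * (u - x) + r * (v - y)) =
      (d - c) * (p + q * (u - x) + r * ((c + d) / 2 - y)) := by
    intro u
    rw [intervalIntegral.integral_add (by simp) (by
      apply Continuous.intervalIntegrable; fun_prop)]
    rw [intervalIntegral.integral_const_mul, intervalIntegral.integral_sub (by simp) (by simp)]
    simp only [intervalIntegral.integral_const, integral_id, smul_eq_mul]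
    ring
  have hl2 : ∫ u in a..b, ((d - c) * (p + q * (u - x) + r * ((c + d) / 2 - y))) =
      (b - a) * (d - c) * (p + q * ((a + b) / 2 - x) + r * ((c + d) / 2 - y)) := by
    have : ∀ u, (d - c) * (p + q * (u - x) + r * ((c + d) / 2 - y)) =
      (d - c) * (p - q * x + r * ((c + d) / 2 - y)) + ((d - c) * q) * u := by intro u; ring
    simp only [this]
    rw [intervalIntegral.integral_add (by simp) (by
      apply Continuous.intervalIntegrable; fun_prop)]
    rw [intervalIntegral.integral_const_mul ((d - c) * q) (fun u : ℝ => u)]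
    simp only [intervalIntegral.integral_const, integral_id, smul_eq_mul]
    ring
  rw [← hl2, ← intervalIntegral.integral_sub hout (by
      apply Continuous.intervalIntegrable; fun_prop)]
  have := intervalIntegral.norm_integral_le_of_norm_le_const (a := a) (b := b)
      (f := fun u => (∫ v in c..d, f (u, v)) -
        (d - c) * (p + q * (u - x) + r * ((c + d) / 2 - y))) (C := B * (d - c)) ?_
  · rwa [abs_of_nonneg (sub_nonneg.2 hab)] at this
  · intro u hu
    rw [Set.uIoc_of_le hab] at hu
    rw [← hl, ← intervalIntegral.integral_sub (hin u) (by
      apply Continuous.intervalIntegrable; fun_prop)]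
    have := intervalIntegral.norm_integral_le_of_norm_le_const (a := c) (b := d)
      (f := fun v => f (u, v) - (p + q * (u - x) + r * (v - y))) (C := B) ?_
    · rwa [abs_of_nonneg (sub_nonneg.2 hcd)] at this
    · intro v hv
      rw [Set.uIoc_of_le hcd] at hv
      exact h u v hu.1.le hu.2 hv.1.le hv.2

/-- Taylor remainder: global bound. -/
lemma aux_taylor (f : ℝ × ℝ → ℝ) (P : ℝ × ℝ) (L : ℝ × ℝ →L[ℝ] ℝ) (C : ℝ)
    (hC : ∀ p, |f p| ≤ C) (hdf : HasFDerivAt f L P) (ε : ℝ) (hε : 0 < ε) :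
    ∃ D, 0 ≤ D ∧ ∀ p, |f p - (f P + L (p - P))| ≤ ε * ‖p - P‖ + D * ‖p - P‖ ^ 2 := by
  have h1 := (hasFDerivAt_iff_isLittleO.1 hdf).def hε
  obtain ⟨δ, hδ, h2⟩ := Metric.eventually_nhds_iff.1 h1
  have hC0 : 0 ≤ C := (abs_nonneg _).trans (hC P)
  refine ⟨2 * C / δ ^ 2 + ‖L‖ / δ, by positivity, fun p => ?_⟩
  by_cases hp : dist p P < δ
  · have h3 := h2 hp
    rw [Real.norm_eq_abs] at h3
    have : f p - (f P + L (p - P)) = f p - f P - L (p - P) := by ring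
    rw [this]
    have : 0 ≤ (2 * C / δ ^ 2 + ‖L‖ / δ) * ‖p - P‖ ^ 2 := by positivity
    linarith
  · rw [dist_eq_norm, not_lt] at hp
    set N := ‖p - P‖
    have hL : |L (p - P)| ≤ ‖L‖ * N := L.le_opNorm _
    have e1 : |f p - (f P + L (p - P))| ≤ 2 * C + ‖L‖ * N := by
      have := hC p
      have := hC P
      rw [abs_le] at *
      constructor <;> linarith
    have e2 : 2 * C ≤ 2 * C / δ ^ 2 * N ^ 2 := by
      rw [div_mul_eq_mul_div, le_div_iff₀ (by positivity)]
      gcongr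
    have e3 : ‖L‖ * N ≤ ‖L‖ / δ * N ^ 2 := by
      rw [div_mul_eq_mul_div, le_div_iff₀ (by positivity), mul_assoc, sq]
      gcongr
    have e4 : 0 ≤ ε * N := by positivity
    nlinarith

lemma aux_moment (φ : ℝ × ℝ → ℝ) (C M u v : ℝ) (hC : ∀ p, |φ p| ≤ C)
    (h1 : Summable (fun kj : ℤ × ℤ => |φ (u - (kj.1 : ℝ), v - (kj.2 : ℝ))| *
        (((kj.1 : ℝ) - u) ^ 2 + ((kj.2 : ℝ) - v) ^ 2)))
    (h2 : (∑' kj : ℤ × ℤ, |φ (u - (kj.1 : ℝ), v - (kj.2 : ℝ))| *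
        (((kj.1 : ℝ) - u) ^ 2 + ((kj.2 : ℝ) - v) ^ 2)) ≤ M) :
    Summable (fun kj : ℤ × ℤ => |φ (u - (kj.1 : ℝ), v - (kj.2 : ℝ))| *
        (1 + (((kj.1 : ℝ) - u) ^ 2 + ((kj.2 : ℝ) - v) ^ 2))) ∧
    (∑' kj : ℤ × ℤ, |φ (u - (kj.1 : ℝ), v - (kj.2 : ℝ))| *
        (1 + (((kj.1 : ℝ) - u) ^ 2 + ((kj.2 : ℝ) - v) ^ 2))) ≤ 2 * M + 4 * C := by
  classical
  set s : Finset (ℤ × ℤ) := Finset.Icc ⌊u⌋ (⌊u⌋ + 1) ×ˢ Finset.Icc ⌊v⌋ (⌊v⌋ + 1) with hs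
  have hcard : s.card = 4 := by
    rw [hs, Finset.card_product, Int.card_Icc, Int.card_Icc]
    have e1 : ⌊u⌋ + 1 + 1 - ⌊u⌋ = 2 := by ring
    have e2 : ⌊v⌋ + 1 + 1 - ⌊v⌋ = 2 := by ring
    rw [e1, e2]; rfl
  have hC0 : 0 ≤ C := (abs_nonneg _).trans (hC 0)
  have hind : HasSum (fun kj : ℤ × ℤ => if kj ∈ s then C else 0) (4 * C) := by
    have := hasSum_sum_of_ne_finset_zero (L := SummationFilter.unconditional _) (f := fun kj : ℤ × ℤ => if kj ∈ s then C else 0) (s := s)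
      (by intro b hb; simp [hb])
    rw [Finset.sum_ite_mem, Finset.inter_self, Finset.sum_const, hcard] at this
    simpa using this
  have key : ∀ (z : ℝ) (k : ℤ), ((k : ℝ) - z) ^ 2 < 1 → k ∈ Finset.Icc ⌊z⌋ (⌊z⌋ + 1) := by
    intro z k hk
    have h := abs_lt.1 ((sq_lt_one_iff_abs_lt_one _).1 hk)
    have hz1 := Int.floor_le z
    have hz2 := Int.lt_floor_add_one z
    rw [Finset.mem_Icc]
    constructor
    · have : (⌊z⌋ : ℝ) < ((k + 1 : ℤ) : ℝ) := by push_cast; linarith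
      have := Int.cast_lt.1 this
      omega
    · have : (k : ℝ) < ((⌊z⌋ + 1 + 1 : ℤ) : ℝ) := by push_cast; linarith
      have := Int.cast_lt.1 this
      omega
  have hle : ∀ kj : ℤ × ℤ, |φ (u - (kj.1 : ℝ), v - (kj.2 : ℝ))| *
        (1 + (((kj.1 : ℝ) - u) ^ 2 + ((kj.2 : ℝ) - v) ^ 2)) ≤
      2 * (|φ (u - (kj.1 : ℝ), v - (kj.2 : ℝ))| *
        (((kj.1 : ℝ) - u) ^ 2 + ((kj.2 : ℝ) - v) ^ 2)) + (if kj ∈ s then C else 0) := by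
    intro kj
    have hp := hC (u - (kj.1 : ℝ), v - (kj.2 : ℝ))
    have hp0 := abs_nonneg (φ (u - (kj.1 : ℝ), v - (kj.2 : ℝ)))
    have hx := sq_nonneg ((kj.1 : ℝ) - u)
    have hy := sq_nonneg ((kj.2 : ℝ) - v)
    have hxy := mul_nonneg hp0 (add_nonneg hx hy)
    by_cases hm : kj ∈ s
    · rw [if_pos hm]; linarith
    · rw [if_neg hm]
      have : 1 ≤ ((kj.1 : ℝ) - u) ^ 2 + ((kj.2 : ℝ) - v) ^ 2 := by
        by_contra hcon
        exact hm (Finset.mem_product.2 ⟨key _ _ (by linarith), key _ _ (by linarith)⟩)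
      nlinarith
  have hsum := (h1.hasSum.mul_left 2).add hind
  have hS : Summable (fun kj : ℤ × ℤ => |φ (u - (kj.1 : ℝ), v - (kj.2 : ℝ))| *
        (1 + (((kj.1 : ℝ) - u) ^ 2 + ((kj.2 : ℝ) - v) ^ 2))) :=
    Summable.of_nonneg_of_le (fun kj => by positivity) hle hsum.summable
  refine ⟨hS, ?_⟩
  have := hasSum_le hle hS.hasSum hsum
  linarith

set_option maxHeartbeats 1000000 in
/-- Voronovskaja type theorem for the bivariate Kantorovich
sampling operators. -/
theorem kantorovich_voronovskaja
    (φ f : ℝ × ℝ → ℝ) (a b c d : ℤ → ℝ) (x y : ℝ)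
    (L : ℝ × ℝ →L[ℝ] ℝ)
    (hφc : Continuous φ) (hφb : ∃ C, ∀ p, |φ p| ≤ C)
    -- (i) partition of unity
    (hpu : ∀ u v : ℝ, HasSum (fun kj : ℤ × ℤ => φ (u - (kj.1 : ℝ), v - (kj.2 : ℝ))) 1)
    -- (ii) finiteness of the second absolute moment M₂(φ)
    (hM2 : ∃ M, ∀ u v : ℝ,
      Summable (fun kj : ℤ × ℤ => |φ (u - (kj.1 : ℝ), v - (kj.2 : ℝ))| *
        (((kj.1 : ℝ) - u) ^ 2 + ((kj.2 : ℝ) - v) ^ 2)) ∧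
      (∑' kj : ℤ × ℤ, |φ (u - (kj.1 : ℝ), v - (kj.2 : ℝ))| *
        (((kj.1 : ℝ) - u) ^ 2 + ((kj.2 : ℝ) - v) ^ 2)) ≤ M)
    -- (ii) uniform vanishing of tails
    (htail : ∀ ε > (0 : ℝ), ∃ R > (0 : ℝ), ∀ u v : ℝ,
      (∑' kj : {p : ℤ × ℤ // ((p.1 : ℝ) - u) ^ 2 + ((p.2 : ℝ) - v) ^ 2 > R ^ 2},
        |φ (u - ((kj : ℤ × ℤ).1 : ℝ), v - ((kj : ℤ × ℤ).2 : ℝ))| *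
          (((kj.val.1 : ℝ) - u) ^ 2 + ((kj.val.2 : ℝ) - v) ^ 2)) < ε)
    -- (iii) vanishing first algebraic moments
    (hm10 : ∀ u v : ℝ,
      HasSum (fun kj : ℤ × ℤ => φ (u - (kj.1 : ℝ), v - (kj.2 : ℝ)) * ((kj.1 : ℝ) - u)) 0)
    (hm01 : ∀ u v : ℝ,
      HasSum (fun kj : ℤ × ℤ => φ (u - (kj.1 : ℝ), v - (kj.2 : ℝ)) * ((kj.2 : ℝ) - v)) 0)
    -- node sequences
    (α β l₀ s₀ K : ℝ) (hl₀ : 0 < l₀) (hs₀ : 0 < s₀)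
    (hα : ∀ k, a k + b k = α) (hβ : ∀ j, c j + d j = β)
    (hlb : ∀ k, l₀ ≤ b k - a k) (hsb : ∀ j, s₀ ≤ d j - c j)
    (hK : ∀ k : ℤ, |a k| ≤ K ∧ |b k| ≤ K ∧ |c k| ≤ K ∧ |d k| ≤ K)
    -- f ∈ L^∞(ℝ²), differentiable at (x, y) with derivative L
    (hfm : Measurable f) (hfb : ∃ C, ∀ p, |f p| ≤ C)
    (hdf : HasFDerivAt f L (x, y)) :
    Tendsto (fun w => w * (kantorovich φ a b c d f w x y - f (x, y))) atTop
      (nhds ((1 / 2) * (α * L (1, 0) + β * L (0, 1)))) := by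
  obtain ⟨Cφ, hCφ⟩ := hφb
  obtain ⟨C, hC⟩ := hfb
  obtain ⟨M, hM⟩ := hM2
  have hCφ0 : 0 ≤ Cφ := (abs_nonneg _).trans (hCφ 0)
  have hM0 : 0 ≤ M := (tsum_nonneg (fun kj => by positivity)).trans (hM 0 0).2
  have hK0 : 0 ≤ K := (abs_nonneg _).trans (hK 0).1
  set B := 2 * M + 4 * Cφ with hB
  set Q := 2 + 2 * K ^ 2 with hQ
  have hB0 : 0 ≤ B := by positivity
  have hQ0 : 0 < Q := by positivity
  set p := L (1, 0) with hp
  set q := L (0, 1) with hq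
  have hL : ∀ s t : ℝ, L (s, t) = p * s + q * t := by
    intro s t
    have : ((s, t) : ℝ × ℝ) = s • (1, 0) + t • (0, 1) := by simp
    rw [this, map_add, map_smul, map_smul, smul_eq_mul, smul_eq_mul]
    ring
  -- main estimate
  have main : ∀ ε > 0, ∃ D, 0 ≤ D ∧ ∀ w > 0,
      |w * (kantorovich φ a b c d f w x y - f (x, y)) - (1 / 2) * (α * p + β * q)|
        ≤ (ε + D / w) * Q * B := by
    intro ε hε
    obtain ⟨D, hD0, hD⟩ := aux_taylor f (x, y) L C hC hdf ε hε
    refine ⟨D, hD0, fun w hw => ?_⟩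
    set A : ℤ × ℤ → ℝ := fun kj => (w ^ 2 / ((b kj.1 - a kj.1) * (d kj.2 - c kj.2))) *
      ∫ u in (((kj.1 : ℝ) + a kj.1) / w)..(((kj.1 : ℝ) + b kj.1) / w),
        ∫ v in (((kj.2 : ℝ) + c kj.2) / w)..(((kj.2 : ℝ) + d kj.2) / w), f (u, v) with hA
    have hAb : ∀ kj : ℤ × ℤ, |w * (A kj - f (x, y)) -
        (p * ((kj.1 : ℝ) - w * x) + q * ((kj.2 : ℝ) - w * y) + (1 / 2) * (α * p + β * q))|
        ≤ (ε + D / w) * Q * (1 + (((kj.1 : ℝ) - w * x) ^ 2 + ((kj.2 : ℝ) - w * y) ^ 2)) := by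
      rintro ⟨k, j⟩
      simp only [hA]
      have hba : 0 < b k - a k := hl₀.trans_le (hlb k)
      have hdc : 0 < d j - c j := hs₀.trans_le (hsb j)
      set ρ := ((k : ℝ) - w * x) ^ 2 + ((j : ℝ) - w * y) ^ 2 with hρ
      have hρ0 : 0 ≤ ρ := by positivity
      set N := K + √ρ with hN
      have hN0 : 0 ≤ N := by positivity
      have hk : |(k : ℝ) - w * x| ≤ √ρ := Real.abs_le_sqrt (by rw [hρ]; nlinarith [sq_nonneg ((j : ℝ) - w * y)])
      have hj : |(j : ℝ) - w * y| ≤ √ρ := Real.abs_le_sqrt (by rw [hρ]; nlinarith [sq_nonneg ((k : ℝ) - w * x)])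
      have hcell := aux_cell f hfm C hC (((k : ℝ) + a k) / w) (((k : ℝ) + b k) / w)
        (((j : ℝ) + c j) / w) (((j : ℝ) + d j) / w) x y (f (x, y)) p q
        (ε * (N / w) + D * (N / w) ^ 2) (by gcongr; linarith) (by gcongr; linarith) ?_
      · set I := ∫ u in (((k : ℝ) + a k) / w)..(((k : ℝ) + b k) / w),
          ∫ v in (((j : ℝ) + c j) / w)..(((j : ℝ) + d j) / w), f (u, v)
        have hbα : b k = α - a k := by linarith [hα k]
        have hdβ : d j = β - c j := by linarith [hβ j]
        set T := w * (w ^ 2 / ((b k - a k) * (d j - c j))) with hT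
        have hT0 : 0 < T := by positivity
        have e1 : w * (w ^ 2 / ((b k - a k) * (d j - c j)) * I - f (x, y)) -
          (p * ((k : ℝ) - w * x) + q * ((j : ℝ) - w * y) + (1 / 2) * (α * p + β * q)) =
          T * (I - (((k : ℝ) + b k) / w - ((k : ℝ) + a k) / w) *
            (((j : ℝ) + d j) / w - ((j : ℝ) + c j) / w) *
            (f (x, y) + p * ((((k : ℝ) + a k) / w + ((k : ℝ) + b k) / w) / 2 - x) +
            q * ((((j : ℝ) + c j) / w + ((j : ℝ) + d j) / w) / 2 - y))) := by
          rw [hT, ← hα k, ← hβ j]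
          field_simp
          ring
        rw [e1, abs_mul, abs_of_pos hT0]
        refine (mul_le_mul_of_nonneg_left hcell hT0.le).trans ?_
        have e2 : T * ((ε * (N / w) + D * (N / w) ^ 2) *
            (((j : ℝ) + d j) / w - ((j : ℝ) + c j) / w) *
            (((k : ℝ) + b k) / w - ((k : ℝ) + a k) / w)) = ε * N + D / w * N ^ 2 := by
          rw [hT]
          have h1 : ((j : ℝ) + d j) / w - ((j : ℝ) + c j) / w = (d j - c j) / w := by ring
          have h2 : ((k : ℝ) + b k) / w - ((k : ℝ) + a k) / w = (b k - a k) / w := by ring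
          rw [h1, h2]
          field_simp
        rw [e2]
        have hs : √ρ ^ 2 = ρ := Real.sq_sqrt hρ0
        have hN2 : N ^ 2 ≤ 2 * K ^ 2 + 2 * ρ := by
          rw [hN]; nlinarith [sq_nonneg (K - √ρ)]
        have hb1 : N ^ 2 ≤ Q * (1 + ρ) := by
          rw [hQ]; nlinarith [mul_nonneg (sq_nonneg K) hρ0]
        have hb2 : N ≤ Q * (1 + ρ) := by
          have : N ≤ 1 + N ^ 2 := by nlinarith [sq_nonneg (N - 1)]
          rw [hQ]; nlinarith [mul_nonneg (sq_nonneg K) hρ0]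
        have hDw : 0 ≤ D / w := by positivity
        linarith [mul_le_mul_of_nonneg_left hb1 hDw, mul_le_mul_of_nonneg_left hb2 hε.le]
      · intro u v hu1 hu2 hv1 hv2
        have hh := hD (u, v)
        rw [Prod.mk_sub_mk, hL] at hh
        rw [add_assoc]
        refine hh.trans ?_
        have hn : ‖((u - x, v - y) : ℝ × ℝ)‖ ≤ N / w := by
          rw [div_le_iff₀ hw] at hu1 hv1
          rw [le_div_iff₀ hw] at hu2 hv2
          obtain ⟨ha1, hb1, -, -⟩ := hK k
          obtain ⟨-, -, hc1, hd1⟩ := hK j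
          rw [abs_le] at *
          refine max_le ?_ ?_
          all_goals
            simp only [Real.norm_eq_abs]
            rw [le_div_iff₀ hw, ← abs_of_pos hw, ← abs_mul, abs_le]
            constructor <;> linarith
        gcongr
    obtain ⟨hS, hSB⟩ := aux_moment φ Cφ M (w * x) (w * y) hCφ (hM _ _).1 (hM _ _).2
    set φw : ℤ × ℤ → ℝ := fun kj => φ (w * x - (kj.1 : ℝ), w * y - (kj.2 : ℝ)) with hφw
    set G : ℤ × ℤ → ℝ := fun kj => φw kj * (w * (A kj - f (x, y)) -
        (p * ((kj.1 : ℝ) - w * x) + q * ((kj.2 : ℝ) - w * y) + (1 / 2) * (α * p + β * q))) with hG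
    have hGb : ∀ kj, ‖G kj‖ ≤ (ε + D / w) * Q * (|φw kj| *
        (1 + (((kj.1 : ℝ) - w * x) ^ 2 + ((kj.2 : ℝ) - w * y) ^ 2))) := by
      intro kj
      rw [hG, Real.norm_eq_abs, abs_mul]
      have := mul_le_mul_of_nonneg_left (hAb kj) (abs_nonneg (φw kj))
      linarith
    have hS2 := hS.hasSum.mul_left ((ε + D / w) * Q)
    have hGn := tsum_of_norm_bounded hS2 hGb
    have hGs : Summable G := Summable.of_norm_bounded hS2.summable hGb
    have h0 := hpu (w * x) (w * y)
    have h10 := hm10 (w * x) (w * y)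
    have h01 := hm01 (w * x) (w * y)
    have htot := (((hGs.hasSum.add (h10.mul_left p)).add (h01.mul_left q)).add
      (h0.mul_left (w * f (x, y) + (1 / 2) * (α * p + β * q)))).mul_left w⁻¹
    have hkan : kantorovich φ a b c d f w x y = w⁻¹ * ((∑' kj, G kj) + p * 0 + q * 0 +
        (w * f (x, y) + (1 / 2) * (α * p + β * q)) * 1) := by
      rw [← htot.tsum_eq]
      unfold kantorovich
      refine tsum_congr fun kj => ?_
      simp only [hG, hφw, hA]
      field_simp
      ring
    have : w * (kantorovich φ a b c d f w x y - f (x, y)) - (1 / 2) * (α * p + β * q) =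
        ∑' kj, G kj := by
      rw [hkan]; field_simp; ring
    rw [this]
    refine hGn.trans ?_
    have : 0 ≤ (ε + D / w) * Q := by positivity
    exact mul_le_mul_of_nonneg_left hSB this
  rw [Metric.tendsto_nhds]
  intro η hη
  obtain ⟨D, hD0, hD⟩ := main (η / (2 * (Q * B + 1))) (by positivity)
  have hlim : Tendsto (fun w : ℝ => D / w * (Q * B)) atTop (nhds 0) := by
    simpa using (tendsto_const_nhds.div_atTop tendsto_id).mul_const (Q * B)
  filter_upwards [hlim.eventually_lt_const (half_pos hη), eventually_gt_atTop 0] with w h1 h2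
  rw [Real.dist_eq]
  refine (hD w h2).trans_lt ?_
  have : η / (2 * (Q * B + 1)) * (Q * B) ≤ η / 2 := by
    have : 0 ≤ Q * B := by positivity
    rw [div_mul_eq_mul_div, div_le_div_iff₀ (by positivity) (by positivity)]
    nlinarith
  rw [mul_assoc, add_mul]
  linarith
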